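/- Let S be a finite state space and E a row-stochastic transition matrix on S that is ergodic (there exists t ≥ 1 such that every entry of the matrix power E^t is strictly positive), with stationary distribution π (a strictly positive probability vector satisfying π E = π). Let T = min{ t ≥ 1 : for every probability distribution q on S, the total variation distance between q E^t and π is at most 1/8 } be the mixing time, where the total variation distance between two vectors u, w indexed by S is max over subsets A ⊆ S of |Σ_{i∈A} u_i − Σ_{i∈A} w_i|, and let ‖u‖_π = sqrt( Σ_{i∈S} u_i² / π(i) ). Then there exists a constant c > 0 (independent of μ and δ) such that the following holds: for every such chain, every initial probability distribution φ on S, every t ≥ 1, every family of weight functions f_1, …, f_t : S → [0,1] satisfying Σ_{v∈S} π(v) f_i(v) = μ for all i, and every δ with 0 ≤ δ ≤ 1, the t-step random walk (V_1, …, V_t) on E started from φ (whose law assigns to a path (v_1,…,v_t) probability φ(v_1) Π_{s=1}^{t−1} E_{v_s, v_{s+1}}) satisfies Pr[ Σ_{i=1}^t f_i(V_i) ≤ (1 − δ) μ t ] ≤ c ‖φ‖_π exp( − δ² μ t / (72 T) ). -/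

import Mathlib

open Finset

/-!
Split the time axis into residue classes modulo the mixing time `T`. By convexity of `exp`, the
moment generating function of `(∑ i, g i (V i)) / T` is at most the average over the classes of
the expectation of `∏ exp (g i (V i))` along one class, where consecutive factors are separated by
a full power `E ^ T`.

That power contracts the variance of functions in `L²(π)` and preserves their mean. Decomposing
functions into their mean and their fluctuation, and using the contraction only on the latter, one
finds a condition on a weight `w` under which multiplying by `w` and then applying `E ^ T` does not
increase the natural quadratic form: `(π ⬝ᵥ u) ^ 2 + ρ Var u ≤ π ⬝ᵥ (u ^ 2 / w)` for all `u`. The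
weights `exp (ε - r f)`, with `ε` a little below `r` times the mean of `f`, satisfy it, so each
class contributes a bounded factor times `‖φ‖_π`, and Markov's inequality with the optimal `r`
gives the tail bound.
-/

namespace FiniteMarkov

open Matrix

section Covariance

variable {S : Type*} [Fintype S] {π : S → ℝ}

/-- The covariance of `u` and `v` under the probability vector `π`; `cov π u u` is the variance,
and `π ⬝ᵥ u` is the mean. -/
def cov (π u v : S → ℝ) : ℝ := π ⬝ᵥ (u * v) - (π ⬝ᵥ u) * (π ⬝ᵥ v)

lemma cov_eq_sum_centered (hπ1 : ∑ i, π i = 1) (u v : S → ℝ) :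
    cov π u v = ∑ i, π i * ((u i - π ⬝ᵥ u) * (v i - π ⬝ᵥ v)) := by
  have expand : ∀ i, π i * ((u i - π ⬝ᵥ u) * (v i - π ⬝ᵥ v)) =
      π i * (u i * v i) - π i * u i * (π ⬝ᵥ v) - π i * v i * (π ⬝ᵥ u)
        + π i * ((π ⬝ᵥ u) * (π ⬝ᵥ v)) := fun i => by ring
  simp_rw [expand, sum_add_distrib, sum_sub_distrib, ← sum_mul, hπ1]
  simp only [cov, dotProduct, Pi.mul_apply]
  ring

lemma cov_self_eq_sum_sq (hπ1 : ∑ i, π i = 1) (u : S → ℝ) :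
    cov π u u = ∑ i, π i * (u i - π ⬝ᵥ u) ^ 2 := by
  simp only [cov_eq_sum_centered hπ1, sq]

lemma cov_self_nonneg (hπ0 : ∀ i, 0 ≤ π i) (hπ1 : ∑ i, π i = 1) (u : S → ℝ) :
    0 ≤ cov π u u := by
  rw [cov_self_eq_sum_sq hπ1]
  exact sum_nonneg fun i _ => mul_nonneg (hπ0 i) (sq_nonneg _)

lemma cov_sq_le (hπ0 : ∀ i, 0 ≤ π i) (hπ1 : ∑ i, π i = 1) (u v : S → ℝ) :
    cov π u v ^ 2 ≤ cov π u u * cov π v v := by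
  rw [cov_eq_sum_centered hπ1, cov_self_eq_sum_sq hπ1, cov_self_eq_sum_sq hπ1]
  exact sum_sq_le_sum_mul_sum_of_sq_le_mul univ
    (fun i _ => mul_nonneg (hπ0 i) (sq_nonneg _)) (fun i _ => mul_nonneg (hπ0 i) (sq_nonneg _))
    fun i _ => le_of_eq (by ring)

lemma dotProduct_le_sqrt_mul_sqrt (hπ : ∀ i, 0 < π i) (φ g : S → ℝ) :
    φ ⬝ᵥ g ≤ √(∑ i, φ i ^ 2 / π i) * √(π ⬝ᵥ g ^ 2) := by
  rw [← Real.sqrt_mul (sum_nonneg fun i _ => div_nonneg (sq_nonneg _) (hπ i).le)]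
  refine Real.le_sqrt_of_sq_le (sum_sq_le_sum_mul_sum_of_sq_le_mul univ
    (fun i _ => div_nonneg (sq_nonneg _) (hπ i).le)
    (fun i _ => mul_nonneg (hπ i).le (sq_nonneg _)) fun i _ => le_of_eq ?_)
  have := (hπ i).ne'
  simp only [Pi.pow_apply]
  field_simp

lemma dotProduct_le_one (hπ0 : ∀ i, 0 ≤ π i) (hπ1 : ∑ i, π i = 1) {f : S → ℝ} (hf : f ≤ 1) :
    π ⬝ᵥ f ≤ 1 :=
  (dotProduct_le_dotProduct_of_nonneg_left hf hπ0).trans_eq (by rw [dotProduct_one, hπ1])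

lemma dotProduct_mulVec_of_vecMul_eq {P : Matrix S S ℝ} (hst : π ᵥ* P = π) (g : S → ℝ) :
    π ⬝ᵥ (P *ᵥ g) = π ⬝ᵥ g := by
  rw [dotProduct_mulVec, hst]

end Covariance

section StochasticMatrix

variable {S : Type*} [Fintype S] [DecidableEq S] {π : S → ℝ} {P : Matrix S S ℝ}

lemma vecMul_pow_eq (hst : π ᵥ* P = π) (m : ℕ) : π ᵥ* (P ^ m) = π := by
  induction m with
  | zero => simp
  | succ m ih => rw [pow_succ, ← vecMul_vecMul, ih, hst]

lemma sq_mulVec_le (hP : P ∈ rowStochastic ℝ S) (g : S → ℝ) : (P *ᵥ g) ^ 2 ≤ P *ᵥ g ^ 2 :=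
  fun i => Real.pow_arith_mean_le_arith_mean_pow_of_even univ (P i) g
    (fun _ _ => nonneg_of_mem_rowStochastic hP) (sum_row_of_mem_rowStochastic hP i) even_two

lemma dotProduct_sq_mulVec_le (hP : P ∈ rowStochastic ℝ S) (hπ0 : ∀ i, 0 ≤ π i)
    (hst : π ᵥ* P = π) (g : S → ℝ) : π ⬝ᵥ (P *ᵥ g) ^ 2 ≤ π ⬝ᵥ g ^ 2 :=
  calc π ⬝ᵥ (P *ᵥ g) ^ 2 ≤ π ⬝ᵥ (P *ᵥ g ^ 2) :=
        dotProduct_le_dotProduct_of_nonneg_left (sq_mulVec_le hP g) hπ0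
    _ = π ⬝ᵥ g ^ 2 := dotProduct_mulVec_of_vecMul_eq hst _

lemma sq_mulVec_sub_mean_le {η : ℝ} (hP : P ∈ rowStochastic ℝ S) (hπ1 : ∑ i, π i = 1) {k : S}
    (hk : ∑ j, |P k j - π j| ≤ η) (g : S → ℝ) :
    ((P *ᵥ g) k - π ⬝ᵥ g) ^ 2 ≤ η * ∑ j, |P k j - π j| * (g j - π ⬝ᵥ g) ^ 2 := by
  have centered : (P *ᵥ g) k - π ⬝ᵥ g = ∑ j, (P k j - π j) * (g j - π ⬝ᵥ g) := by
    simp_rw [mul_sub, sum_sub_distrib, sub_mul, sum_sub_distrib, ← sum_mul,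
      sum_row_of_mem_rowStochastic hP, hπ1, sub_self, sub_zero]
    rfl
  rw [centered]
  calc (∑ j, (P k j - π j) * (g j - π ⬝ᵥ g)) ^ 2
      ≤ (∑ j, |P k j - π j|) * ∑ j, |P k j - π j| * (g j - π ⬝ᵥ g) ^ 2 :=
        sum_sq_le_sum_mul_sum_of_sq_le_mul univ (fun _ _ => abs_nonneg _)
          (fun _ _ => by positivity)
          fun j _ => le_of_eq (by rw [mul_pow, ← sq_abs (P k j - π j)]; ring)
    _ ≤ η * ∑ j, |P k j - π j| * (g j - π ⬝ᵥ g) ^ 2 :=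
        mul_le_mul_of_nonneg_right hk (sum_nonneg fun _ _ => by positivity)

lemma sum_mul_abs_sub_le (hP : P ∈ rowStochastic ℝ S) (hπ0 : ∀ i, 0 ≤ π i)
    (hπ1 : ∑ i, π i = 1) (hst : π ᵥ* P = π) (j : S) :
    ∑ k, π k * |P k j - π j| ≤ 2 * π j :=
  calc ∑ k, π k * |P k j - π j| ≤ ∑ k, π k * (P k j + π j) := by
        gcongr with k
        · exact hπ0 k
        · have := nonneg_of_mem_rowStochastic hP (i := k) (j := j)
          rw [abs_le]
          constructor <;> linarith [hπ0 j]
    _ = (π ᵥ* P) j + (∑ k, π k) * π j := by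
        simp_rw [mul_add, sum_add_distrib, sum_mul]
        rfl
    _ = 2 * π j := by rw [hst, hπ1]; ring

lemma cov_mulVec_self_le {η : ℝ} (hη : 0 ≤ η) (hP : P ∈ rowStochastic ℝ S)
    (hπ0 : ∀ i, 0 ≤ π i) (hπ1 : ∑ i, π i = 1) (hst : π ᵥ* P = π)
    (hl1 : ∀ k, ∑ j, |P k j - π j| ≤ η) (g : S → ℝ) :
    cov π (P *ᵥ g) (P *ᵥ g) ≤ 2 * η * cov π g g := by
  rw [cov_self_eq_sum_sq hπ1, cov_self_eq_sum_sq hπ1, dotProduct_mulVec_of_vecMul_eq hst]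
  calc ∑ k, π k * ((P *ᵥ g) k - π ⬝ᵥ g) ^ 2
      ≤ ∑ k, π k * (η * ∑ j, |P k j - π j| * (g j - π ⬝ᵥ g) ^ 2) := by
        gcongr with k
        · exact hπ0 k
        · exact sq_mulVec_sub_mean_le hP hπ1 (hl1 k) g
    _ = η * ∑ j, (∑ k, π k * |P k j - π j|) * (g j - π ⬝ᵥ g) ^ 2 := by
        simp_rw [mul_sum, sum_mul, mul_sum]
        rw [sum_comm]
        exact sum_congr rfl fun j _ => sum_congr rfl fun k _ => by ring
    _ ≤ η * ∑ j, 2 * π j * (g j - π ⬝ᵥ g) ^ 2 := by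
        gcongr with j
        exact sum_mul_abs_sub_le hP hπ0 hπ1 hst j
    _ = 2 * η * ∑ j, π j * (g j - π ⬝ᵥ g) ^ 2 := by
        rw [mul_sum, mul_sum]
        exact sum_congr rfl fun j _ => by ring

end StochasticMatrix

section DampedWeights

variable {S : Type*} [Fintype S] {π w w' : S → ℝ} {ρ : ℝ}

/-- A positive weight `w` is `ρ`-damped if `(π ⬝ᵥ u) ^ 2 + ρ Var u ≤ π ⬝ᵥ (u ^ 2 / w)` for all `u`.
Multiplying by such a weight increases the `L²(π)` size of a function by no more than a step of the
chain that contracts variances by `ρ ^ 2` is able to absorb. -/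
structure IsDamped (ρ : ℝ) (π w : S → ℝ) : Prop where
  pos : ∀ x, 0 < w x
  sq_mean_add_le : ∀ u : S → ℝ, (π ⬝ᵥ u) ^ 2 + ρ * cov π u u ≤ π ⬝ᵥ (u ^ 2 / w)

namespace IsDamped

lemma mono (hw : IsDamped ρ π w) (hπ0 : ∀ i, 0 ≤ π i) (hpos : ∀ x, 0 < w' x) (hle : w' ≤ w) :
    IsDamped ρ π w' where
  pos := hpos
  sq_mean_add_le u := (hw.sq_mean_add_le u).trans <|
    dotProduct_le_dotProduct_of_nonneg_left
      (fun x => div_le_div_of_nonneg_left (sq_nonneg _) (hpos x) (hle x)) hπ0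

lemma mean_le_one (hw : IsDamped ρ π w) (hρ0 : 0 ≤ ρ) (hπ0 : ∀ i, 0 ≤ π i)
    (hπ1 : ∑ i, π i = 1) : π ⬝ᵥ w ≤ 1 := by
  have h := hw.sq_mean_add_le w
  have hdiv : w ^ 2 / w = w := by
    ext x
    simp [sq, (hw.pos x).ne']
  rw [hdiv] at h
  have := mul_nonneg hρ0 (cov_self_nonneg hπ0 hπ1 w)
  nlinarith

lemma le_inv (hw : IsDamped ρ π w) (hρ0 : 0 < ρ) (hρ1 : ρ ≤ 1) (hπ : ∀ i, 0 < π i) (x : S) :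
    w x ≤ ρ⁻¹ := by
  classical
  have h := hw.sq_mean_add_le (Pi.single x 1)
  have hsq : (Pi.single x 1 : S → ℝ) * Pi.single x 1 = Pi.single x 1 := by
    simp [← Pi.single_mul]
  have hdiv : (Pi.single x 1 : S → ℝ) / w = Pi.single x (w x)⁻¹ := by
    ext y
    by_cases hy : y = x <;> simp [hy]
  simp only [cov, sq, hsq, hdiv, dotProduct_single, mul_one] at h
  have hle : ρ * π x ≤ (w x)⁻¹ * π x := by
    nlinarith [mul_nonneg (sub_nonneg.2 hρ1) (mul_self_nonneg (π x))]
  exact le_inv_of_le_inv₀ hρ0 (le_of_mul_le_mul_right hle (hπ x))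

/-- The bilinear form `π ⬝ᵥ (u * P v)` splits into the product of the means and a covariance, on
which `P` gains the factor `ρ`; dampedness bounds the resulting two-dimensional form. -/
lemma sq_dotProduct_mul_mulVec_le {P : Matrix S S ℝ} (hw : IsDamped ρ π w)
    (hw' : IsDamped ρ π w') (hρ0 : 0 ≤ ρ) (hπ0 : ∀ i, 0 ≤ π i) (hπ1 : ∑ i, π i = 1)
    (hst : π ᵥ* P = π) (hcov : ∀ g, cov π (P *ᵥ g) (P *ᵥ g) ≤ ρ ^ 2 * cov π g g) (u v : S → ℝ) :
    (π ⬝ᵥ (u * (P *ᵥ v))) ^ 2 ≤ (π ⬝ᵥ (u ^ 2 / w)) * (π ⬝ᵥ (v ^ 2 / w')) := by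
  set a := π ⬝ᵥ u
  set b := π ⬝ᵥ v
  set p := cov π u u
  set q := cov π v v
  set c := cov π u (P *ᵥ v) with hc
  have hp : 0 ≤ p := cov_self_nonneg hπ0 hπ1 u
  have hq : 0 ≤ q := cov_self_nonneg hπ0 hπ1 v
  have split : π ⬝ᵥ (u * (P *ᵥ v)) = a * b + c := by
    rw [hc, cov, dotProduct_mulVec_of_vecMul_eq hst]
    ring
  have hc_sq : c ^ 2 ≤ ρ ^ 2 * (p * q) := by
    calc c ^ 2 ≤ p * cov π (P *ᵥ v) (P *ᵥ v) := cov_sq_le hπ0 hπ1 _ _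
      _ ≤ p * (ρ ^ 2 * q) := mul_le_mul_of_nonneg_left (hcov v) hp
      _ = ρ ^ 2 * (p * q) := by ring
  have cross : 2 * (a * b * c) ≤ ρ * (a ^ 2 * q + b ^ 2 * p) := by
    refine le_of_sq_le_sq ?_ (by positivity)
    nlinarith [mul_le_mul_of_nonneg_left hc_sq (sq_nonneg (a * b)),
      sq_nonneg (ρ * (a ^ 2 * q - b ^ 2 * p))]
  calc (π ⬝ᵥ (u * (P *ᵥ v))) ^ 2 ≤ (a ^ 2 + ρ * p) * (b ^ 2 + ρ * q) := by
        rw [split]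
        nlinarith
    _ ≤ (π ⬝ᵥ (u ^ 2 / w)) * (π ⬝ᵥ (v ^ 2 / w')) := by
        have hu := hw.sq_mean_add_le u
        have hu0 : 0 ≤ a ^ 2 + ρ * p := by positivity
        exact mul_le_mul hu (hw'.sq_mean_add_le v) (by positivity) (hu0.trans hu)

/-- Dual form of the bilinear bound: test it on `u = w * P (w' * g)` and `v = w' * g`. -/
lemma dotProduct_mul_sq_mulVec_le {P : Matrix S S ℝ} (hw : IsDamped ρ π w)
    (hw' : IsDamped ρ π w') (hρ0 : 0 ≤ ρ) (hπ0 : ∀ i, 0 ≤ π i) (hπ1 : ∑ i, π i = 1)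
    (hst : π ᵥ* P = π) (hcov : ∀ g, cov π (P *ᵥ g) (P *ᵥ g) ≤ ρ ^ 2 * cov π g g) (g : S → ℝ) :
    π ⬝ᵥ (w * (P *ᵥ (w' * g)) ^ 2) ≤ π ⬝ᵥ (w' * g ^ 2) := by
  have hdiv : ∀ {w : S → ℝ} (_ : ∀ x, 0 < w x) (h : S → ℝ), (w * h) ^ 2 / w = w * h ^ 2 := by
    intro w hpos h
    ext x
    have := (hpos x).ne'
    simp only [Pi.div_apply, Pi.pow_apply, Pi.mul_apply]
    field_simp
  have hnonneg : ∀ {w : S → ℝ} (_ : ∀ x, 0 < w x) (h : S → ℝ), 0 ≤ π ⬝ᵥ (w * h ^ 2) :=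
    fun hpos h => sum_nonneg fun x _ =>
      mul_nonneg (hπ0 x) (mul_nonneg (hpos x).le (sq_nonneg _))
  have h := hw.sq_dotProduct_mul_mulVec_le hw' hρ0 hπ0 hπ1 hst hcov (w * (P *ᵥ (w' * g))) (w' * g)
  rw [hdiv hw.pos, hdiv hw'.pos, mul_assoc, ← sq, sq (π ⬝ᵥ _)] at h
  by_contra! hlt
  exact absurd h (not_le.2 (mul_lt_mul_of_pos_left hlt ((hnonneg hw'.pos g).trans_lt hlt)))

end IsDamped

lemma linearFractional_le_chord {y n₀ n₁ d₀ d₁ : ℝ} (hy0 : 0 ≤ y) (hy1 : y ≤ 1) (hd₀ : 0 < d₀)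
    (hd : d₀ ≤ d₁) (hn : n₁ * d₀ ≤ n₀ * d₁) :
    ((1 - y) * n₀ + y * n₁) / ((1 - y) * d₀ + y * d₁) ≤ (1 - y) * (n₀ / d₀) + y * (n₁ / d₁) := by
  have hd₁ : 0 < d₁ := hd₀.trans_le hd
  have := sub_nonneg.2 hy1
  have hdy : 0 < (1 - y) * d₀ + y * d₁ := by nlinarith
  have gap : ((1 - y) * (n₀ / d₀) + y * (n₁ / d₁)) * ((1 - y) * d₀ + y * d₁) =
      (1 - y) * n₀ + y * n₁ + y * (1 - y) * (d₁ - d₀) * (n₀ * d₁ - n₁ * d₀) / (d₀ * d₁) := by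
    field_simp
    ring
  rw [div_le_iff₀ hdy, gap]
  have := sub_nonneg.2 hd
  have := sub_nonneg.2 hn
  exact le_add_of_nonneg_right (by positivity)

lemma isDamped_of_sum_le (hρ1 : ρ < 1) (hπ0 : ∀ i, 0 ≤ π i) (hpos : ∀ x, 0 < w x)
    (hlt : ∀ x, ρ * w x < 1) (hsum : ∑ x, π x * (w x / (1 - ρ * w x)) ≤ (1 - ρ)⁻¹) :
    IsDamped ρ π w := by
  refine ⟨hpos, fun u => ?_⟩
  have hd : ∀ x, 0 < 1 - ρ * w x := fun x => sub_pos.2 (hlt x)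
  set R := ∑ x, π x * (u x ^ 2 * ((1 - ρ * w x) / w x))
  have hR0 : ∀ x, 0 ≤ π x * (u x ^ 2 * ((1 - ρ * w x) / w x)) := fun x =>
    mul_nonneg (hπ0 x) (mul_nonneg (sq_nonneg _) (div_pos (hd x) (hpos x)).le)
  have cauchy : (π ⬝ᵥ u) ^ 2 ≤ (∑ x, π x * (w x / (1 - ρ * w x))) * R := by
    refine sum_sq_le_sum_mul_sum_of_sq_le_mul univ
      (fun x _ => mul_nonneg (hπ0 x) (div_pos (hpos x) (hd x)).le) (fun x _ => hR0 x)
      fun x _ => le_of_eq ?_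
    have hw := (hpos x).ne'
    have hd' := (hd x).ne'
    generalize 1 - ρ * w x = d at hd' ⊢
    field_simp
  have hmean : (1 - ρ) * (π ⬝ᵥ u) ^ 2 ≤ R := by
    rw [← le_inv_mul_iff₀ (sub_pos.2 hρ1)]
    exact cauchy.trans (mul_le_mul_of_nonneg_right hsum (sum_nonneg fun x _ => hR0 x))
  have hR : R = π ⬝ᵥ (u ^ 2 / w) - ρ * (π ⬝ᵥ (u * u)) := by
    simp only [R, dotProduct, mul_sum, ← sum_sub_distrib, Pi.div_apply, Pi.pow_apply, Pi.mul_apply]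
    refine sum_congr rfl fun x _ => ?_
    have := (hpos x).ne'
    field_simp
  rw [cov]
  linarith

lemma lt_one_sub_of_mul_eq {a ε m : ℝ} (hρ1 : ρ < 1) (ha0 : 0 ≤ a) (hm1 : m ≤ 1)
    (hε : ε * (1 - ρ + a) = a * (1 - ρ) * m) : ε < 1 - ρ := by
  have := sub_pos.2 hρ1
  by_contra! h
  have upper : ε * (1 - ρ + a) ≤ a * (1 - ρ) :=
    hε.trans_le (mul_le_of_le_one_right (by positivity) hm1)
  have lower : (1 - ρ) * (1 - ρ + a) ≤ ε * (1 - ρ + a) := by gcongr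
  nlinarith

lemma chord_mean_le_inv_one_sub {a ε m : ℝ} (hρ0 : 0 ≤ ρ) (hρ1 : ρ < 1) (ha0 : 0 ≤ a)
    (hε0 : 0 ≤ ε) (hε1 : ε < 1 - ρ) (hε : ε * (1 - ρ + a) = a * (1 - ρ) * m) :
    (1 - m) / (1 - ρ - ε) + m * (1 - a) / (1 - ρ - ε + ρ * a) ≤ (1 - ρ)⁻¹ := by
  have hd₀ : 0 < 1 - ρ - ε := sub_pos.2 hε1
  have hd₁ : 0 < 1 - ρ - ε + ρ * a := by positivity
  rw [div_add_div _ _ hd₀.ne' hd₁.ne', ← one_div, div_le_div_iff₀ (by positivity) (sub_pos.2 hρ1)]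
  have slack : 0 ≤ ε * (a * (1 - ρ - ε) + ρ * ε) := by positivity
  linear_combination slack + (1 - ε) * hε

/-- Convexity reduces the condition of `isDamped_of_sum_le` to a function `f` with values in
`{0, 1}`, where it depends on `f` only through its mean. The relation `hε` strengthens this
condition to one that is linear in `ε`. -/
lemma isDamped_affine {f : S → ℝ} {a ε : ℝ} (hρ0 : 0 ≤ ρ) (hρ1 : ρ < 1) (hπ0 : ∀ i, 0 ≤ π i)
    (hπ1 : ∑ i, π i = 1) (hf : ∀ x, 0 ≤ f x ∧ f x ≤ 1) (ha0 : 0 ≤ a) (ha1 : a < 1) (hε0 : 0 ≤ ε)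
    (hε : ε * (1 - ρ + a) = a * (1 - ρ) * (π ⬝ᵥ f)) :
    IsDamped ρ π fun x => (1 - a * f x) / (1 - ε) := by
  have hεβ : ε < 1 - ρ :=
    lt_one_sub_of_mul_eq hρ1 ha0 (dotProduct_le_one hπ0 hπ1 fun x => (hf x).2) hε
  have hε1 : 0 < 1 - ε := by linarith
  have hn : ∀ x, 0 < 1 - a * f x := fun x => by nlinarith [hf x]
  refine isDamped_of_sum_le hρ1 hπ0 (fun x => div_pos (hn x) hε1) (fun x => ?_) ?_
  · rw [mul_div_assoc', div_lt_one hε1]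
    nlinarith [mul_nonneg (mul_nonneg hρ0 ha0) (hf x).1]
  calc ∑ x, π x * ((1 - a * f x) / (1 - ε) / (1 - ρ * ((1 - a * f x) / (1 - ε))))
      = ∑ x, π x * (((1 - f x) * 1 + f x * (1 - a)) /
          ((1 - f x) * (1 - ρ - ε) + f x * (1 - ρ - ε + ρ * a))) := by
        refine sum_congr rfl fun x _ => ?_
        congr 1
        rw [mul_div_assoc' ρ, one_sub_div hε1.ne', div_div_div_cancel_right₀ hε1.ne']
        congr 1 <;> ring
    _ ≤ ∑ x, π x * ((1 - f x) * (1 / (1 - ρ - ε)) + f x * ((1 - a) / (1 - ρ - ε + ρ * a))) := by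
        gcongr with x
        · exact hπ0 x
        · exact linearFractional_le_chord (hf x).1 (hf x).2 (sub_pos.2 hεβ)
            (le_add_of_nonneg_right (by positivity)) (by nlinarith)
    _ = (1 - π ⬝ᵥ f) / (1 - ρ - ε) + (π ⬝ᵥ f) * (1 - a) / (1 - ρ - ε + ρ * a) := by
        simp_rw [mul_add, sum_add_distrib, ← mul_assoc, ← sum_mul, mul_sub, mul_one,
          sum_sub_distrib, hπ1, dotProduct]
        ring
    _ ≤ (1 - ρ)⁻¹ := chord_mean_le_inv_one_sub hρ0 hρ1 ha0 hε0 hεβ hε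

lemma exp_neg_mul_le {r y : ℝ} (hr : 0 ≤ r) (hy0 : 0 ≤ y) (hy1 : y ≤ 1) :
    Real.exp (-(r * y)) ≤ 1 - r / (1 + r) * y := by
  have convex := convexOn_exp.2 (Set.mem_univ 0) (Set.mem_univ (-r)) (sub_nonneg.2 hy1) hy0
    (sub_add_cancel 1 y)
  have hexp : Real.exp (-r) ≤ 1 - r / (1 + r) := by
    rw [Real.exp_neg, one_sub_div (by positivity), add_sub_cancel_right, one_div]
    exact inv_anti₀ (by positivity) (by linarith [Real.add_one_le_exp r])
  simp only [smul_eq_mul, mul_zero, zero_add, Real.exp_zero, mul_one] at convex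
  calc Real.exp (-(r * y)) = Real.exp (y * -r) := by ring_nf
    _ ≤ 1 - y + y * Real.exp (-r) := convex
    _ ≤ 1 - y + y * (1 - r / (1 + r)) := by gcongr
    _ = 1 - r / (1 + r) * y := by ring

lemma isDamped_exp {f : S → ℝ} {r : ℝ} (hρ0 : 0 ≤ ρ) (hρ1 : ρ < 1) (hπ0 : ∀ i, 0 ≤ π i)
    (hπ1 : ∑ i, π i = 1) (hf : ∀ x, 0 ≤ f x ∧ f x ≤ 1) (hr : 0 ≤ r) :
    IsDamped ρ π fun x =>
      Real.exp (r * (π ⬝ᵥ f) / (1 + (1 + (1 - ρ)⁻¹) * r) - r * f x) := by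
  have hβ : 0 < 1 - ρ := sub_pos.2 hρ1
  have hm0 : 0 ≤ π ⬝ᵥ f := dotProduct_nonneg_of_nonneg hπ0 fun x => (hf x).1
  have hm1 : π ⬝ᵥ f ≤ 1 := dotProduct_le_one hπ0 hπ1 fun x => (hf x).2
  set ε := r * (π ⬝ᵥ f) / (1 + (1 + (1 - ρ)⁻¹) * r) with hε
  have hε0 : 0 ≤ ε := by positivity
  have hε1 : ε < 1 := by
    rw [hε, div_lt_one (by positivity)]
    have : 0 ≤ (1 - ρ)⁻¹ * r := by positivity
    nlinarith
  have ha1 : r / (1 + r) < 1 := (div_lt_one (by positivity)).2 (by linarith)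
  have hεa : ε * (1 - ρ + r / (1 + r)) = r / (1 + r) * (1 - ρ) * (π ⬝ᵥ f) := by
    rw [hε]
    field_simp
    ring
  refine (isDamped_affine hρ0 hρ1 hπ0 hπ1 hf (by positivity) ha1 hε0 hεa).mono hπ0
    (fun x => Real.exp_pos _) fun x => ?_
  have hexp := exp_neg_mul_le hr (hf x).1 (hf x).2
  rw [sub_eq_add_neg, Real.exp_add, mul_comm]
  exact (mul_le_mul hexp (Real.exp_bound_div_one_sub_of_interval hε0 hε1) (Real.exp_pos _).le
    ((Real.exp_pos _).le.trans hexp)).trans_eq (mul_one_div _ _)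

end DampedWeights

section RandomWalk

variable {S : Type*} {E : Matrix S S ℝ} {φ π : S → ℝ} {ρ : ℝ} {w : ℕ → S → ℝ} {T n : ℕ}

/-- The probability that the random walk on `E` started from `φ` follows the path `v`; the walk has
`n + 1` vertices, so that its initial vertex always exists. -/
def walkProb (φ : S → ℝ) (E : Matrix S S ℝ) (v : Fin (n + 1) → S) : ℝ :=
  φ (v 0) * ∏ s : Fin n, E (v s.castSucc) (v s.succ)

lemma walkProb_nonneg (hφ : ∀ x, 0 ≤ φ x) (hE : ∀ i j, 0 ≤ E i j) (v : Fin (n + 1) → S) :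
    0 ≤ walkProb φ E v :=
  mul_nonneg (hφ _) (prod_nonneg fun _ _ => hE _ _)

lemma walkProb_eq_prod_dite (v : Fin (n + 1) → S) :
    walkProb φ E v = φ (v 0) * ∏ s : Fin (n + 1),
      if h : s.val + 1 < n + 1 then E (v s) (v ⟨s.val + 1, h⟩) else 1 := by
  rw [Fin.prod_univ_castSucc]
  simp [walkProb, Fin.succ]

lemma walkProb_cons (x : S) (v : Fin (n + 1) → S) :
    walkProb φ E (Fin.cons x v : Fin (n + 2) → S) = φ x * walkProb (E x) E v := by
  simp [walkProb, Fin.prod_univ_succ]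

variable [Fintype S]

/-- The function `x ↦ 𝔼ₓ[w 0 (V 0) * ⋯ * w (n - 1) (V (n - 1))]`, for the walk `V` on `E` started at
the vertex `x`. -/
def prodMean (E : Matrix S S ℝ) : (ℕ → S → ℝ) → ℕ → S → ℝ
  | _, 0 => 1
  | w, n + 1 => w 0 * (E *ᵥ prodMean E (fun i => w (i + 1)) n)

variable [DecidableEq S]

lemma sum_walkProb_mul_prod (hE : E ∈ rowStochastic ℝ S) (φ : S → ℝ) (w : ℕ → S → ℝ) (n : ℕ) :
    ∑ v : Fin (n + 1) → S, walkProb φ E v * ∏ i : Fin (n + 1), w i (v i) =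
      φ ⬝ᵥ prodMean E w (n + 1) := by
  induction n generalizing φ w with
  | zero =>
    rw [← (Equiv.funUnique (Fin 1) S).symm.sum_comp]
    simp [walkProb, prodMean, dotProduct, one_vecMul_of_mem_rowStochastic hE]
  | succ n ih =>
    rw [← (Fin.consEquiv fun _ => S).sum_comp, Fintype.sum_prod_type]
    refine sum_congr rfl fun x _ => ?_
    calc ∑ v : Fin (n + 1) → S, walkProb φ E (Fin.cons x v : Fin (n + 2) → S) *
          ∏ i : Fin (n + 2), w i ((Fin.cons x v : Fin (n + 2) → S) i)
        = ∑ v : Fin (n + 1) → S, φ x * w 0 x *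
            (walkProb (E x) E v * ∏ i : Fin (n + 1), w (i + 1) (v i)) := by
          simp only [walkProb_cons, Fin.prod_univ_succ (n := n + 1), Fin.cons_zero, Fin.cons_succ,
            Fin.val_zero, Fin.val_succ, mul_mul_mul_comm]
      _ = φ x * prodMean E w (n + 2) x := by
          rw [← mul_sum, ih (E x) fun i => w (i + 1), mul_assoc]
          rfl

lemma prodMean_add (n : ℕ) {m : ℕ} (hw : ∀ i < m, w i = 1) :
    prodMean E w (m + n) = E ^ m *ᵥ prodMean E (fun i => w (i + m)) n := by
  induction m generalizing w with
  | zero => simp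
  | succ m ih =>
    rw [Nat.succ_add, prodMean, hw 0 m.succ_pos, one_mul, ih fun i hi => hw _ (by lia),
      mulVec_mulVec, ← pow_succ']
    simp only [add_assoc, add_comm m 1]

lemma prodMean_eq_one (hE : E ∈ rowStochastic ℝ S) (hw : ∀ i < n, w i = 1) :
    prodMean E w n = 1 := by
  have h := prodMean_add (E := E) 0 hw
  rwa [add_zero, prodMean, one_vecMul_of_mem_rowStochastic (pow_mem hE n)] at h

lemma dotProduct_mul_sq_mulVec_prodMean_le_one (hE : E ∈ rowStochastic ℝ S) (hρ0 : 0 ≤ ρ)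
    (hπ0 : ∀ i, 0 ≤ π i) (hπ1 : ∑ i, π i = 1) (hst : π ᵥ* E = π) (hT : 0 < T)
    (hcov : ∀ g, cov π (E ^ T *ᵥ g) (E ^ T *ᵥ g) ≤ ρ ^ 2 * cov π g g)
    (hw : ∀ i, T ∣ i → IsDamped ρ π (w i)) (hw1 : ∀ i, ¬T ∣ i → w i = 1) :
    π ⬝ᵥ (w 0 * (E *ᵥ prodMean E (fun i => w (i + 1)) n) ^ 2) ≤ 1 := by
  induction n using Nat.strong_induction_on generalizing w with
  | _ n ih =>
    have hw0 := hw 0 (dvd_zero T)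
    rcases lt_or_ge n T with hn | hn
    · rw [prodMean_eq_one hE fun i hi => hw1 _ (Nat.not_dvd_of_pos_of_lt i.succ_pos (by lia)),
        one_vecMul_of_mem_rowStochastic hE, one_pow, mul_one]
      exact hw0.mean_le_one hρ0 hπ0 hπ1
    · obtain ⟨k, rfl⟩ : ∃ k, T = k + 1 := ⟨T - 1, by lia⟩
      obtain ⟨m, rfl⟩ : ∃ m, n = k + (m + 1) := ⟨n - (k + 1), by lia⟩
      rw [prodMean_add _ fun i hi => hw1 _ (Nat.not_dvd_of_pos_of_lt i.succ_pos (by lia)),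
        mulVec_mulVec, ← pow_succ', prodMean]
      refine (hw0.dotProduct_mul_sq_mulVec_le (hw (0 + k + 1) (by simp)) hρ0 hπ0 hπ1
        (vecMul_pow_eq hst _) hcov _).trans ?_
      have := ih m (by lia) (w := fun i => w (i + (k + 1)))
        (fun i hi => hw _ (Nat.dvd_add_self_right.2 hi))
        fun i hi => hw1 _ (mt Nat.dvd_add_self_right.1 hi)
      simp only [add_assoc, add_comm 1 (k + 1), add_comm 1 k] at this ⊢
      exact this

lemma dotProduct_sq_prodMean_le (hE : E ∈ rowStochastic ℝ S) (hρ0 : 0 < ρ) (hρ1 : ρ ≤ 1)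
    (hπ : ∀ i, 0 < π i) (hπ1 : ∑ i, π i = 1) (hst : π ᵥ* E = π) {j : ℕ} (hj : j < T)
    (hcov : ∀ g, cov π (E ^ T *ᵥ g) (E ^ T *ᵥ g) ≤ ρ ^ 2 * cov π g g)
    (hw : ∀ i, i % T = j → IsDamped ρ π (w i)) (hw1 : ∀ i, i % T ≠ j → w i = 1) :
    π ⬝ᵥ prodMean E w n ^ 2 ≤ ρ⁻¹ := by
  have hπ0 := fun i => (hπ i).le
  rcases le_or_gt n j with hn | hn
  · rw [prodMean_eq_one hE fun i hi => hw1 i (by rw [Nat.mod_eq_of_lt] <;> lia), one_pow,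
      dotProduct_one, hπ1]
    exact (one_le_inv₀ hρ0).2 hρ1
  obtain ⟨m, rfl⟩ : ∃ m, n = j + (m + 1) := ⟨n - (j + 1), by lia⟩
  have hmod : ∀ i, T ∣ i ↔ (i + j) % T = j := fun i => by
    rw [← Nat.add_modEq_right_iff (b := j), Nat.ModEq, Nat.mod_eq_of_lt hj]
  rw [prodMean_add _ fun i hi => hw1 i (by rw [Nat.mod_eq_of_lt] <;> lia)]
  refine (dotProduct_sq_mulVec_le (pow_mem hE j) hπ0 (vecMul_pow_eq hst j) _).trans ?_
  set w' := fun i => w (i + j)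
  have hw' : IsDamped ρ π (w' 0) := hw _ ((hmod 0).1 (dvd_zero T))
  calc π ⬝ᵥ prodMean E w' (m + 1) ^ 2
      ≤ π ⬝ᵥ (ρ⁻¹ • (w' 0 * (E *ᵥ prodMean E (fun i => w' (i + 1)) m) ^ 2)) := by
        refine dotProduct_le_dotProduct_of_nonneg_left (fun x => ?_) hπ0
        simp only [prodMean, Pi.pow_apply, Pi.mul_apply, Pi.smul_apply, smul_eq_mul, mul_pow]
        rw [sq (w' 0 x), mul_assoc]
        exact mul_le_mul_of_nonneg_right (hw'.le_inv hρ0 hρ1 hπ x)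
          (mul_nonneg (hw'.pos x).le (sq_nonneg _))
    _ ≤ ρ⁻¹ := by
        rw [dotProduct_smul, smul_eq_mul]
        exact mul_le_of_le_one_right (inv_nonneg.2 hρ0.le)
          (dotProduct_mul_sq_mulVec_prodMean_le_one hE hρ0.le hπ0 hπ1 hst (by lia) hcov
            (fun i hi => hw _ ((hmod i).1 hi)) fun i hi => hw1 _ (mt (hmod i).2 hi))

end RandomWalk

section Concentration

lemma exp_sum_div_card_le {ι κ : Type*} [DecidableEq κ] {s : Finset ι} {t : Finset κ}
    (ht : t.Nonempty) {c : ι → κ} (hc : ∀ i ∈ s, c i ∈ t) (x : ι → ℝ) :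
    Real.exp ((∑ i ∈ s, x i) / #t) ≤ (∑ j ∈ t, Real.exp (∑ i ∈ s with c i = j, x i)) / #t := by
  have hcard : (#t : ℝ) ≠ 0 := Nat.cast_ne_zero.2 ht.card_pos.ne'
  have jensen := convexOn_exp.map_sum_le (t := t) (w := fun _ => (#t : ℝ)⁻¹)
    (p := fun j => ∑ i ∈ s with c i = j, x i) (fun _ _ => by positivity)
    (by rw [sum_const, nsmul_eq_mul, mul_inv_cancel₀ hcard]) fun _ _ => Set.mem_univ _
  simpa only [smul_eq_mul, inv_mul_eq_div, ← sum_div, sum_fiberwise_of_maps_to hc] using jensen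

lemma sum_filter_le_exp_neg_mul {ι : Type*} {s : Finset ι} {p : ι → ℝ} (hp : ∀ i ∈ s, 0 ≤ p i)
    {A : ι → Prop} [DecidablePred A] {X : ι → ℝ} {a : ℝ} (hA : ∀ i ∈ s, A i → a ≤ X i) :
    ∑ i ∈ s with A i, p i ≤ Real.exp (-a) * ∑ i ∈ s, p i * Real.exp (X i) := by
  rw [mul_sum, sum_filter]
  refine sum_le_sum fun i hi => ?_
  have tilt : Real.exp (-a) * (p i * Real.exp (X i)) = p i * Real.exp (X i - a) := by
    rw [sub_eq_add_neg, Real.exp_add]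
    ring
  rw [tilt]
  split_ifs with h
  · exact le_mul_of_one_le_right (hp i hi) (Real.one_le_exp (sub_nonneg.2 (hA i hi h)))
  · exact mul_nonneg (hp i hi) (Real.exp_pos _).le

lemma sq_div_four_mul_le {κ δ : ℝ} (hκ : 0 < κ) (hδ : 0 ≤ δ) :
    δ ^ 2 / (4 * κ) ≤
      δ / (2 * κ) / (1 + κ * (δ / (2 * κ))) - δ / (2 * κ) * (1 - δ) := by
  have gap : δ / (2 * κ) / (1 + κ * (δ / (2 * κ))) - δ / (2 * κ) * (1 - δ) =
      δ ^ 2 / (4 * κ) + δ ^ 3 / (4 * κ * (2 + δ)) := by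
    have : 2 + δ ≠ 0 := by positivity
    field_simp
    ring
  rw [gap]
  exact le_add_of_nonneg_right (by positivity)

variable {S : Type*} [Fintype S] [DecidableEq S] {E : Matrix S S ℝ} {φ π : S → ℝ} {ρ : ℝ}
  {T n : ℕ}

lemma sum_walkProb_mul_exp_le (hE : E ∈ rowStochastic ℝ S) (hρ0 : 0 < ρ) (hρ1 : ρ ≤ 1)
    (hπ : ∀ i, 0 < π i) (hπ1 : ∑ i, π i = 1) (hst : π ᵥ* E = π) (hT : 0 < T)
    (hcov : ∀ g, cov π (E ^ T *ᵥ g) (E ^ T *ᵥ g) ≤ ρ ^ 2 * cov π g g) (hφ : ∀ i, 0 ≤ φ i)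
    {g : Fin (n + 1) → S → ℝ} (hg : ∀ i, IsDamped ρ π fun x => Real.exp (g i x)) :
    ∑ v, walkProb φ E v * Real.exp ((∑ i, g i (v i)) / T) ≤
      √(∑ i, φ i ^ 2 / π i) * √ρ⁻¹ := by
  set w : ℕ → ℕ → S → ℝ := fun j i =>
    if i % T = j then fun x => Real.exp (g (Fin.ofNat (n + 1) i) x) else 1 with hw
  have split : ∀ v : Fin (n + 1) → S, Real.exp ((∑ i, g i (v i)) / T) ≤
      (∑ j ∈ range T, ∏ i : Fin (n + 1), w j i (v i)) / T := fun v => by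
    have h := exp_sum_div_card_le (nonempty_range_iff.2 hT.ne') (s := univ)
      (c := fun i : Fin (n + 1) => i.val % T) (fun i _ => mem_range.2 (Nat.mod_lt _ hT))
      fun i => g i (v i)
    simpa only [card_range, Real.exp_sum, prod_filter, hw, ite_apply, Fin.ofNat_val_eq_self,
      Pi.one_apply] using h
  have bound : ∀ j ∈ range T,
      φ ⬝ᵥ prodMean E (w j) (n + 1) ≤ √(∑ i, φ i ^ 2 / π i) * √ρ⁻¹ := fun j hj => by
    refine (dotProduct_le_sqrt_mul_sqrt hπ _ _).trans ?_
    gcongr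
    exact dotProduct_sq_prodMean_le hE hρ0 hρ1 hπ hπ1 hst (mem_range.1 hj) hcov
      (fun i hi => by simpa only [hw, if_pos hi] using hg _) fun i hi => if_neg hi
  calc ∑ v, walkProb φ E v * Real.exp ((∑ i, g i (v i)) / T)
      ≤ ∑ v, walkProb φ E v * ((∑ j ∈ range T, ∏ i : Fin (n + 1), w j i (v i)) / T) :=
        sum_le_sum fun v _ => mul_le_mul_of_nonneg_left (split v)
          (walkProb_nonneg hφ hE.1 v)
    _ = (∑ j ∈ range T, φ ⬝ᵥ prodMean E (w j) (n + 1)) / T := by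
        simp_rw [← sum_walkProb_mul_prod hE, ← mul_div_assoc, ← sum_div, mul_sum]
        rw [sum_comm]
    _ ≤ √(∑ i, φ i ^ 2 / π i) * √ρ⁻¹ := by
        rw [div_le_iff₀' (by positivity)]
        simpa only [card_range, nsmul_eq_mul] using sum_le_card_nsmul _ _ _ bound

theorem sum_walkProb_filter_le (hE : E ∈ rowStochastic ℝ S) (hρ0 : 0 < ρ) (hρ1 : ρ < 1)
    (hπ : ∀ i, 0 < π i) (hπ1 : ∑ i, π i = 1) (hst : π ᵥ* E = π) (hT : 0 < T)
    (hcov : ∀ g, cov π (E ^ T *ᵥ g) (E ^ T *ᵥ g) ≤ ρ ^ 2 * cov π g g) (hφ : ∀ i, 0 ≤ φ i)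
    {f : Fin (n + 1) → S → ℝ} (hf : ∀ i x, 0 ≤ f i x ∧ f i x ≤ 1) {δ : ℝ} (hδ : 0 ≤ δ) :
    ∑ v with ∑ i, f i (v i) ≤ (1 - δ) * ∑ i, π ⬝ᵥ f i, walkProb φ E v ≤
      √(∑ i, φ i ^ 2 / π i) * √ρ⁻¹ *
        Real.exp (-(δ ^ 2 * ∑ i, π ⬝ᵥ f i) / (4 * (1 + (1 - ρ)⁻¹) * T)) := by
  have := sub_pos.2 hρ1
  have hπ0 := fun i => (hπ i).le
  set M := ∑ i, π ⬝ᵥ f i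
  have hM0 : 0 ≤ M := sum_nonneg fun i _ =>
    dotProduct_nonneg_of_nonneg hπ0 fun x => (hf i x).1
  set κ := 1 + (1 - ρ)⁻¹
  have hκ0 : 0 < κ := by positivity
  set r := δ / (2 * κ)
  have hr0 : 0 ≤ r := by positivity
  have optimal : δ ^ 2 / (4 * κ) ≤ r / (1 + κ * r) - r * (1 - δ) := sq_div_four_mul_le hκ0 hδ
  have exponent : ∀ v : Fin (n + 1) → S, ∑ i, f i (v i) ≤ (1 - δ) * M → δ ^ 2 * M / (4 * κ * T) ≤
      (∑ i, (r * (π ⬝ᵥ f i) / (1 + κ * r) - r * f i (v i))) / T := fun v hv => by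
    rw [← div_div]
    gcongr
    calc δ ^ 2 * M / (4 * κ) = δ ^ 2 / (4 * κ) * M := by ring
      _ ≤ (r / (1 + κ * r) - r * (1 - δ)) * M := by gcongr
      _ = r * M / (1 + κ * r) - r * ((1 - δ) * M) := by ring
      _ ≤ r * M / (1 + κ * r) - r * ∑ i, f i (v i) := by gcongr
      _ = ∑ i, (r * (π ⬝ᵥ f i) / (1 + κ * r) - r * f i (v i)) := by
        rw [sum_sub_distrib, ← sum_div, ← mul_sum, ← mul_sum]
  have mgf := sum_walkProb_mul_exp_le hE hρ0 hρ1.le hπ hπ1 hst hT hcov hφ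
    fun i => isDamped_exp hρ0.le hρ1 hπ0 hπ1 (hf i) hr0
  calc ∑ v with ∑ i, f i (v i) ≤ (1 - δ) * M, walkProb φ E v
      ≤ Real.exp (-(δ ^ 2 * M / (4 * κ * T))) * ∑ v, walkProb φ E v *
          Real.exp ((∑ i, (r * (π ⬝ᵥ f i) / (1 + κ * r) - r * f i (v i))) / T) :=
        sum_filter_le_exp_neg_mul (fun v _ => walkProb_nonneg hφ hE.1 v) fun v _ => exponent v
    _ ≤ Real.exp (-(δ ^ 2 * M / (4 * κ * T))) * (√(∑ i, φ i ^ 2 / π i) * √ρ⁻¹) :=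
        mul_le_mul_of_nonneg_left mgf (Real.exp_pos _).le
    _ = √(∑ i, φ i ^ 2 / π i) * √ρ⁻¹ * Real.exp (-(δ ^ 2 * M) / (4 * κ * T)) := by
        rw [neg_div, mul_comm]

end Concentration

section Mixing

variable {S : Type*} [Fintype S] {π : S → ℝ} {P : Matrix S S ℝ} {η α : ℝ}

/-- `P` sends every probability vector to within total variation distance `η` of `π`. The mixing
time of a chain `E` is the first `s ≥ 1` with `IsMixing (1 / 8) π (E ^ s)`. -/
def IsMixing (η : ℝ) (π : S → ℝ) (P : Matrix S S ℝ) : Prop :=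
  ∀ q : S → ℝ, (∀ i, 0 ≤ q i) → ∑ i, q i = 1 →
    ∀ A : Finset S, |∑ i ∈ A, (q ᵥ* P) i - ∑ i ∈ A, π i| ≤ η

lemma sum_abs_sub_le_of_forall_abs_sum_sub_le {u v : S → ℝ}
    (h : ∀ A : Finset S, |∑ i ∈ A, u i - ∑ i ∈ A, v i| ≤ η) : ∑ i, |u i - v i| ≤ 2 * η := by
  classical
  have abs_split : ∀ i, |u i - v i| =
      (if v i ≤ u i then u i - v i else 0) + if ¬v i ≤ u i then v i - u i else 0 := fun i => by
    split_ifs with hi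
    · rw [abs_of_nonneg (sub_nonneg.2 hi), add_zero]
    · rw [abs_of_neg (sub_neg.2 (not_le.1 hi)), neg_sub, zero_add]
  simp_rw [abs_split, sum_add_distrib, ← sum_filter, sum_sub_distrib]
  linarith [(abs_le.1 (h {i | v i ≤ u i})).2, (abs_le.1 (h {i | ¬v i ≤ u i})).1]

lemma IsMixing.sum_abs_row_sub_le (h : IsMixing η π P) (k : S) : ∑ j, |P k j - π j| ≤ 2 * η := by
  classical
  have hrow := h (Pi.single k 1) (fun i => by rw [Pi.single_apply]; positivity) (by simp)
  simp only [single_one_vecMul, row_apply] at hrow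
  exact sum_abs_sub_le_of_forall_abs_sum_sub_le hrow

variable [DecidableEq S]

/-- Doeblin's argument: the rank-one part `α π` of the rows of `P` annihilates vectors of total
mass zero, and the remainder `P - α π` is nonnegative with row sums `1 - α`. -/
lemma sum_abs_vecMul_le (hP : P ∈ rowStochastic ℝ S) (hπ1 : ∑ i, π i = 1)
    (hα : ∀ i j, α * π j ≤ P i j) {x : S → ℝ} (hx : ∑ i, x i = 0) :
    ∑ j, |(x ᵥ* P) j| ≤ (1 - α) * ∑ i, |x i| := by
  have centered : ∀ j, (x ᵥ* P) j = ∑ i, x i * (P i j - α * π j) := fun j => by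
    simp_rw [mul_sub, sum_sub_distrib, ← sum_mul, hx, zero_mul, sub_zero]
    rfl
  calc ∑ j, |(x ᵥ* P) j| ≤ ∑ j, ∑ i, |x i| * (P i j - α * π j) := by
        gcongr with j
        rw [centered]
        refine (abs_sum_le_sum_abs _ _).trans_eq (sum_congr rfl fun i _ => ?_)
        rw [abs_mul, abs_of_nonneg (sub_nonneg.2 (hα i j))]
    _ = (1 - α) * ∑ i, |x i| := by
        rw [sum_comm]
        simp_rw [← mul_sum, sum_sub_distrib, ← mul_sum, sum_row_of_mem_rowStochastic hP, hπ1,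
          mul_one, ← sum_mul, mul_comm]

lemma sum_abs_vecMul_pow_le (hP : P ∈ rowStochastic ℝ S) (hπ1 : ∑ i, π i = 1)
    (hα : ∀ i j, α * π j ≤ P i j) (hα1 : α ≤ 1) {x : S → ℝ} (hx : ∑ i, x i = 0) (n : ℕ) :
    ∑ j, |(x ᵥ* P ^ n) j| ≤ (1 - α) ^ n * ∑ i, |x i| := by
  induction n with
  | zero => simp
  | succ n ih =>
    have mass : ∑ j, (x ᵥ* P ^ n) j = 0 := by
      rw [← dotProduct_one, ← dotProduct_mulVec,
        one_vecMul_of_mem_rowStochastic (pow_mem hP n), dotProduct_one, hx]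
    rw [pow_succ, ← vecMul_vecMul, pow_succ', mul_assoc]
    exact (sum_abs_vecMul_le hP hπ1 hα mass).trans
      (mul_le_mul_of_nonneg_left ih (sub_nonneg.2 hα1))

lemma isMixing_pow_of_mul_le (hP : P ∈ rowStochastic ℝ S) (hπ0 : ∀ i, 0 ≤ π i)
    (hπ1 : ∑ i, π i = 1) (hst : π ᵥ* P = π) (hα : ∀ i j, α * π j ≤ P i j) (hα1 : α ≤ 1) (n : ℕ) :
    IsMixing (2 * (1 - α) ^ n) π (P ^ n) := fun q hq0 hq1 A => by
  have hx : ∑ i, (q - π) i = 0 := by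
    simp only [Pi.sub_apply, sum_sub_distrib, hq1, hπ1, sub_self]
  have hx2 : ∑ i, |(q - π) i| ≤ 2 := by
    calc ∑ i, |(q - π) i| ≤ ∑ i, (q i + π i) := by
          gcongr with i
          exact (abs_sub _ _).trans_eq (by rw [abs_of_nonneg (hq0 i), abs_of_nonneg (hπ0 i)])
      _ = 2 := by rw [sum_add_distrib, hq1, hπ1]; norm_num
  calc |∑ i ∈ A, (q ᵥ* P ^ n) i - ∑ i ∈ A, π i| = |∑ i ∈ A, ((q - π) ᵥ* P ^ n) i| := by
        simp only [sub_vecMul, vecMul_pow_eq hst, Pi.sub_apply, sum_sub_distrib]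
    _ ≤ ∑ i, |((q - π) ᵥ* P ^ n) i| :=
        (abs_sum_le_sum_abs _ _).trans
          (sum_le_sum_of_subset_of_nonneg (subset_univ A) fun _ _ _ => abs_nonneg _)
    _ ≤ (1 - α) ^ n * ∑ i, |(q - π) i| := sum_abs_vecMul_pow_le hP hπ1 hα hα1 hx n
    _ ≤ 2 * (1 - α) ^ n := by
        rw [mul_comm]
        exact mul_le_mul_of_nonneg_right hx2 (pow_nonneg (sub_nonneg.2 hα1) n)

lemma exists_isMixing_pow {E : Matrix S S ℝ} (hE : E ∈ rowStochastic ℝ S) (hπ0 : ∀ i, 0 ≤ π i)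
    (hπ1 : ∑ i, π i = 1) (hst : π ᵥ* E = π) (hη : 0 < η)
    (herg : ∃ t, 1 ≤ t ∧ ∀ i j, 0 < (E ^ t) i j) : ∃ s, 1 ≤ s ∧ IsMixing η π (E ^ s) := by
  obtain ⟨t, ht, hpos⟩ := herg
  have hP := pow_mem hE t
  obtain ⟨i₀, -, -⟩ := exists_ne_zero_of_sum_ne_zero (hπ1 ▸ one_ne_zero)
  have := Nonempty.intro i₀
  obtain ⟨⟨i, j⟩, hmin⟩ := Finite.exists_min fun p : S × S => (E ^ t) p.1 p.2
  set α := (E ^ t) i j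
  have hα : ∀ k l, α * π l ≤ (E ^ t) k l := fun k l =>
    (mul_le_of_le_one_right (hpos i j).le
      (hπ1 ▸ single_le_sum (fun x _ => hπ0 x) (mem_univ l))).trans (hmin (k, l))
  have hα1 : α ≤ 1 := le_one_of_mem_rowStochastic hP
  obtain ⟨n, hn⟩ : ∃ n, (1 - α) ^ n < η / 2 :=
    exists_pow_lt_of_lt_one (half_pos hη) (sub_lt_self 1 (hpos i j))
  refine ⟨t * (n + 1), Nat.mul_pos ht n.succ_pos, fun q hq0 hq1 A => ?_⟩
  rw [pow_mul]
  refine (isMixing_pow_of_mul_le hP hπ0 hπ1 (vecMul_pow_eq hst t) hα hα1 _ q hq0 hq1 A).trans ?_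
  have := pow_le_pow_of_le_one (sub_nonneg.2 hα1) (sub_le_self 1 (hpos i j).le) n.le_succ
  rw [Nat.succ_eq_add_one] at this
  linarith

end Mixing

end FiniteMarkov

open FiniteMarkov Matrix in
theorem stmt_0_general {S : Type*} [Fintype S] [DecidableEq S] {E : Matrix S S ℝ} {π : S → ℝ}
    (hE : E ∈ rowStochastic ℝ S) (hπ : ∀ i, 0 < π i) (hπ1 : ∑ i, π i = 1) (hst : π ᵥ* E = π)
    {T : ℕ} (hT : 1 ≤ T) (hmix : IsMixing (1 / 8) π (E ^ T)) {φ : S → ℝ} (hφ : ∀ i, 0 ≤ φ i)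
    {n : ℕ} {f : Fin (n + 1) → S → ℝ} (hf : ∀ i x, 0 ≤ f i x ∧ f i x ≤ 1) {δ : ℝ} (hδ : 0 ≤ δ) :
    ∑ v with ∑ i, f i (v i) ≤ (1 - δ) * ∑ i, π ⬝ᵥ f i, walkProb φ E v ≤
      √(4 / 3) * √(∑ i, φ i ^ 2 / π i) * Real.exp (-(δ ^ 2 * ∑ i, π ⬝ᵥ f i) / (20 * T)) := by
  have hπ0 := fun i => (hπ i).le
  have hcov : ∀ g, cov π (E ^ T *ᵥ g) (E ^ T *ᵥ g) ≤ (3 / 4) ^ 2 * cov π g g := fun g =>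
    (cov_mulVec_self_le (by norm_num) (pow_mem hE T) hπ0 hπ1 (vecMul_pow_eq hst T)
      hmix.sum_abs_row_sub_le g).trans <|
        mul_le_mul_of_nonneg_right (by norm_num) (cov_self_nonneg hπ0 hπ1 g)
  have h := sum_walkProb_filter_le hE (by norm_num) (by norm_num) hπ hπ1 hst hT hcov hφ hf hδ
  have hκ : 4 * (1 + (1 - 3 / 4)⁻¹) = (20 : ℝ) := by norm_num
  rwa [hκ, inv_div, mul_comm √(∑ i, φ i ^ 2 / π i)] at h

/-- Chernoff–Hoeffding bound for Markov chains.  There is a constant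
`c > 0` (independent of `μ` and `δ`) such that: for every finite state space `S`,
every row-stochastic ergodic transition matrix `E` on `S` with (strictly positive)
stationary distribution `π`, with mixing time
`T = min {t ≥ 1 : ∀ prob. dist. q, ‖q Eᵗ - π‖_TV ≤ 1/8}` (total variation distance
expressed as `max_{A ⊆ S} |∑_{i∈A} u i - ∑_{i∈A} w i|`, i.e. all `A` satisfy the
bound), every initial distribution `φ`, every `t ≥ 1`, every family of weight
functions `f i : S → [0,1]` with common expected weight `∑ v, π v * f i v = μ`, and
every `0 ≤ δ ≤ 1`, the `t`-step random walk `(V 1, …, V t)` started from `φ`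
(assigning to a path `v` probability `φ (v 1) * ∏_s E (v s) (v (s+1))`) satisfies
`Pr[∑ i, f i (V i) ≤ (1 - δ) μ t] ≤ c * ‖φ‖_π * exp (-δ² μ t / (72 T))`,
where `‖φ‖_π = sqrt (∑ i, φ i ^ 2 / π i)`. -/
theorem stmt_0 :
    ∃ c : ℝ, 0 < c ∧
      ∀ (S : Type) [Fintype S] [DecidableEq S]
        (E : Matrix S S ℝ) (π : S → ℝ),
        (∀ i j : S, 0 ≤ E i j) →
        (∀ i : S, ∑ j, E i j = 1) →
        (∃ t : ℕ, 1 ≤ t ∧ ∀ i j : S, 0 < (E ^ t) i j) →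
        (∀ i : S, 0 < π i) → (∑ i, π i = 1) →
        (∀ j : S, ∑ i, π i * E i j = π j) →
        ∀ T : ℕ,
          T = sInf {s : ℕ | 1 ≤ s ∧ ∀ q : S → ℝ, (∀ i, 0 ≤ q i) → (∑ i, q i = 1) →
              ∀ A : Finset S,
                |(∑ i ∈ A, ∑ k, q k * (E ^ s) k i) - ∑ i ∈ A, π i| ≤ 1 / 8} →
        ∀ φ : S → ℝ, (∀ i : S, 0 ≤ φ i) → (∑ i, φ i = 1) →
        ∀ (t : ℕ) (ht : 1 ≤ t),
        ∀ (f : Fin t → S → ℝ) (μ : ℝ),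
          (∀ (i : Fin t) (v : S), 0 ≤ f i v ∧ f i v ≤ 1) →
          (∀ i : Fin t, ∑ v, π v * f i v = μ) →
        ∀ δ : ℝ, 0 ≤ δ → δ ≤ 1 →
          (∑ v : Fin t → S,
              if ∑ i, f i (v i) ≤ (1 - δ) * μ * t then
                φ (v ⟨0, ht⟩) *
                  ∏ s : Fin t,
                    (if h : s.val + 1 < t then E (v s) (v ⟨s.val + 1, h⟩) else 1)
              else 0)
            ≤ c * Real.sqrt (∑ i, φ i ^ 2 / π i) *
                Real.exp (-(δ ^ 2 * μ * t) / (72 * T)) := by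
  refine ⟨√(4 / 3), by positivity, ?_⟩
  intro S _ _ E π hE0 hE1 herg hπ hπ1 hst T hT φ hφ _ t ht f μ hf hμ δ hδ _
  have hE := Matrix.mem_rowStochastic_iff_sum.2 ⟨hE0, hE1⟩
  have hst' := funext hst
  obtain ⟨hT1, hmix⟩ : 1 ≤ T ∧ FiniteMarkov.IsMixing (1 / 8) π (E ^ T) :=
    hT ▸ Nat.sInf_mem (FiniteMarkov.exists_isMixing_pow hE (fun i => (hπ i).le) hπ1 hst'
      (by norm_num) herg)
  obtain ⟨n, rfl⟩ := Nat.exists_eq_add_of_le' ht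
  have hsum : ∑ i, π ⬝ᵥ f i = μ * ↑(n + 1) := by
    simp [dotProduct, hμ, mul_comm]
  have hμ0 : 0 ≤ μ := hμ 0 ▸ sum_nonneg fun x _ => mul_nonneg (hπ x).le (hf 0 x).1
  calc _ = ∑ v with ∑ i, f i (v i) ≤ (1 - δ) * ∑ i, π ⬝ᵥ f i, FiniteMarkov.walkProb φ E v := by
        rw [sum_filter, hsum]
        simp only [FiniteMarkov.walkProb_eq_prod_dite, mul_assoc]
        rfl
    _ ≤ _ := stmt_0_general hE hπ hπ1 hst' hT1 hmix hφ hf hδ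
    _ ≤ _ := by
        rw [hsum, ← mul_assoc, neg_div, neg_div]
        gcongr
        norm_num
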